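/- The logistic sigmoid function σ(x) = 1/(1 + e^{−x}) is discriminatory for every compact set K ⊆ ℝ^N; that is, for every finite signed regular Borel measure μ on K, if ∫_K σ(yᵀx + θ) dμ(x) = 0 for all y ∈ ℝ^N and all θ ∈ ℝ, then μ = 0. -/

import Mathlib

open Matrix MeasureTheory

/-- A function `φ : ℝ → ℝ` is discriminatory for `K ⊆ ℝ^N` if for every finite
signed regular Borel measure `μ` on `K`, `∫_K φ(yᵀx + θ) dμ(x) = 0` for all
`y ∈ ℝ^N` and `θ ∈ ℝ` implies `μ = 0`. The integral against the signed measure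
is expressed via its Jordan decomposition. -/
def Discriminatory {N : ℕ} (φ : ℝ → ℝ) (K : Set (Fin N → ℝ)) : Prop :=
  ∀ μ : SignedMeasure K,
    μ.toJordanDecomposition.posPart.Regular →
    μ.toJordanDecomposition.negPart.Regular →
    (∀ (y : Fin N → ℝ) (θ : ℝ),
      (∫ x : K, φ (y ⬝ᵥ (x : Fin N → ℝ) + θ) ∂μ.toJordanDecomposition.posPart) -
      (∫ x : K, φ (y ⬝ᵥ (x : Fin N → ℝ) + θ) ∂μ.toJordanDecomposition.negPart) = 0) →
    μ = 0

/-!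
For a bounded `φ` with limits `a` at `-∞` and `b ≠ a` at `+∞`, the steep shifted functions
`φ (r² (t - c) + r)` converge boundedly and pointwise, as `r → ∞`, to the step function that is `a`
on `(-∞, c)` and `b` on `[c, ∞)`. By dominated convergence, the integrals of `φ (s t + θ)` determine
the mass of every half-line, hence a finite measure on `ℝ`. Applied to all one-dimensional
projections, this determines a finite measure on `ℝ^N` by the Cramér–Wold theorem, so the positive
and negative parts of a signed measure annihilating all `φ (yᵀ x + θ)` coincide.
-/

open Filter Set Topology

section

/-- The linear term `r` makes the limit `b`, rather than `φ 0`, at the jump `t = c`. -/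
lemma tendsto_comp_sq_mul_sub_add {X : Type*} [TopologicalSpace X] {φ : ℝ → X} {a b : X}
    (ha : Tendsto φ atBot (𝓝 a)) (hb : Tendsto φ atTop (𝓝 b)) (c t : ℝ) :
    Tendsto (fun r : ℝ ↦ φ (r ^ 2 * (t - c) + r)) atTop
      (𝓝 ((Ici c).piecewise (fun _ ↦ b) (fun _ ↦ a) t)) := by
  by_cases ht : c ≤ t
  · rw [piecewise_eq_of_mem _ _ _ (mem_Ici.2 ht)]
    have hle (r : ℝ) : r ≤ r ^ 2 * (t - c) + r :=
      le_add_of_nonneg_left (mul_nonneg (sq_nonneg r) (sub_nonneg.2 ht))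
    exact hb.comp (tendsto_atTop_mono hle tendsto_id)
  · rw [piecewise_eq_of_notMem _ _ _ (notMem_Ici.2 (not_le.1 ht))]
    have hbot : Tendsto (fun r : ℝ ↦ r * (r * (t - c) + 1)) atTop atBot :=
      tendsto_id.atTop_mul_atBot₀ <| tendsto_atBot_add_const_right _ _ <|
        tendsto_id.atTop_mul_const_of_neg (sub_neg.2 (not_le.1 ht))
    exact ha.comp (hbot.congr fun r ↦ by ring)

variable {φ : ℝ → ℝ} {a b C : ℝ}

lemma tendsto_integral_comp_sq_mul_sub_add (hφ : Measurable φ) (hC : ∀ t, |φ t| ≤ C)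
    (ha : Tendsto φ atBot (𝓝 a)) (hb : Tendsto φ atTop (𝓝 b))
    (μ : Measure ℝ) [IsFiniteMeasure μ] (c : ℝ) :
    Tendsto (fun r : ℝ ↦ ∫ t, φ (r ^ 2 * (t - c) + r) ∂μ) atTop
      (𝓝 (μ.real (Ici c) * b + μ.real (Iio c) * a)) := by
  have hstep : ∫ t, (Ici c).piecewise (fun _ ↦ b) (fun _ ↦ a) t ∂μ =
      μ.real (Ici c) * b + μ.real (Iio c) * a := by
    rw [integral_piecewise measurableSet_Ici integrableOn_const integrableOn_const,
      setIntegral_const, setIntegral_const, compl_Ici, smul_eq_mul, smul_eq_mul]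
  rw [← hstep]
  exact tendsto_integral_filter_of_dominated_convergence (fun _ ↦ C)
    (.of_forall fun r ↦ (hφ.comp (by fun_prop)).aestronglyMeasurable)
    (.of_forall fun r ↦ ae_of_all _ fun t ↦ hC _) (integrable_const C)
    (ae_of_all _ (tendsto_comp_sq_mul_sub_add ha hb c))

lemma exists_ne_zero_of_tendsto_ne (ha : Tendsto φ atBot (𝓝 a)) (hb : Tendsto φ atTop (𝓝 b))
    (hab : a ≠ b) : ∃ θ, φ θ ≠ 0 := by
  by_contra! hzero
  obtain rfl : φ = fun _ ↦ 0 := funext hzero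
  exact hab ((tendsto_nhds_unique ha tendsto_const_nhds).trans
    (tendsto_nhds_unique tendsto_const_nhds hb))

lemma measure_real_ext_of_forall_integral_comp_mul_add (hφ : Measurable φ) (hC : ∀ t, |φ t| ≤ C)
    (ha : Tendsto φ atBot (𝓝 a)) (hb : Tendsto φ atTop (𝓝 b)) (hab : a ≠ b)
    {μ ν : Measure ℝ} [IsFiniteMeasure μ] [IsFiniteMeasure ν]
    (h : ∀ s θ : ℝ, ∫ t, φ (s * t + θ) ∂μ = ∫ t, φ (s * t + θ) ∂ν) : μ = ν := by
  have hmass : μ.real univ = ν.real univ := by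
    obtain ⟨θ, hθ⟩ := exists_ne_zero_of_tendsto_ne ha hb hab
    simpa [hθ] using h 0 θ
  refine Measure.ext_of_Ici μ ν fun c ↦ (measureReal_eq_measureReal_iff).1 ?_
  have hsteep (r : ℝ) : ∫ t, φ (r ^ 2 * (t - c) + r) ∂ν = ∫ t, φ (r ^ 2 * (t - c) + r) ∂μ := by
    have haffine (t : ℝ) : r ^ 2 * (t - c) + r = r ^ 2 * t + (r - r ^ 2 * c) := by ring
    simpa only [haffine] using (h (r ^ 2) (r - r ^ 2 * c)).symm
  have hstep : μ.real (Ici c) * b + μ.real (Iio c) * a =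
      ν.real (Ici c) * b + ν.real (Iio c) * a :=
    tendsto_nhds_unique (tendsto_integral_comp_sq_mul_sub_add hφ hC ha hb μ c)
      ((tendsto_integral_comp_sq_mul_sub_add hφ hC ha hb ν c).congr hsteep)
  have hIio (ρ : Measure ℝ) [IsFiniteMeasure ρ] :
      ρ.real (Iio c) = ρ.real univ - ρ.real (Ici c) := by
    rw [← compl_Ici, measureReal_compl measurableSet_Ici]
  rw [hIio, hIio, hmass] at hstep
  exact mul_right_cancel₀ (sub_ne_zero.2 hab.symm) (by linear_combination hstep)

section Dual

variable {E : Type*} [NormedAddCommGroup E] [NormedSpace ℝ E] [CompleteSpace E]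
  [SecondCountableTopology E] [MeasurableSpace E] [BorelSpace E]
  {μ ν : Measure E} [IsFiniteMeasure μ] [IsFiniteMeasure ν]

/-- The **Cramér–Wold theorem**. -/
lemma measure_ext_of_forall_map_strongDual (h : ∀ L : StrongDual ℝ E, μ.map L = ν.map L) :
    μ = ν := by
  refine Measure.ext_of_charFunDual (funext fun L ↦ ?_)
  rw [charFunDual_eq_charFun_map_one, charFunDual_eq_charFun_map_one, h]

lemma measure_ext_of_forall_integral_comp_strongDual_add
    (hφ : Measurable φ) (hC : ∀ t, |φ t| ≤ C) (ha : Tendsto φ atBot (𝓝 a))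
    (hb : Tendsto φ atTop (𝓝 b)) (hab : a ≠ b)
    (h : ∀ (L : StrongDual ℝ E) (θ : ℝ), ∫ x, φ (L x + θ) ∂μ = ∫ x, φ (L x + θ) ∂ν) : μ = ν := by
  refine measure_ext_of_forall_map_strongDual fun L ↦
    measure_real_ext_of_forall_integral_comp_mul_add hφ hC ha hb hab fun s θ ↦ ?_
  have hmap (ρ : Measure E) : ∫ t, φ (s * t + θ) ∂ρ.map L = ∫ x, φ ((s • L) x + θ) ∂ρ :=
    integral_map (by fun_prop) (hφ.comp (by fun_prop)).aestronglyMeasurable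
  rw [hmap, hmap, h]

end Dual

lemma measure_ext_of_forall_integral_comp_dotProduct_add {ι : Type*} [Fintype ι]
    (hφ : Measurable φ) (hC : ∀ t, |φ t| ≤ C) (ha : Tendsto φ atBot (𝓝 a))
    (hb : Tendsto φ atTop (𝓝 b)) (hab : a ≠ b)
    {μ ν : Measure (ι → ℝ)} [IsFiniteMeasure μ] [IsFiniteMeasure ν]
    (h : ∀ (y : ι → ℝ) (θ : ℝ), ∫ x, φ (y ⬝ᵥ x + θ) ∂μ = ∫ x, φ (y ⬝ᵥ x + θ) ∂ν) : μ = ν := by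
  classical
  refine measure_ext_of_forall_integral_comp_strongDual_add hφ hC ha hb hab fun L θ ↦ ?_
  obtain ⟨y, hy⟩ := (dotProductEquiv ℝ ι).surjective L.toLinearMap
  have hL (x : ι → ℝ) : L x = y ⬝ᵥ x := (LinearMap.congr_fun hy x).symm
  simpa only [hL] using h y θ

lemma measure_map_injective_of_eq_comap {X Y : Type*} [mX : MeasurableSpace X]
    [mY : MeasurableSpace Y] {f : X → Y} (hf : mX = mY.comap f) :
    Function.Injective (Measure.map f) := by
  intro μ ν h
  have hmeas : Measurable f := hf ▸ comap_measurable f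
  ext s hs
  obtain ⟨t, ht, rfl⟩ : MeasurableSet[mY.comap f] s := hf ▸ hs
  rw [← Measure.map_apply hmeas ht, h, Measure.map_apply hmeas ht]

lemma signedMeasure_eq_zero_of_posPart_eq_negPart {X : Type*} [MeasurableSpace X]
    {μ : SignedMeasure X}
    (h : μ.toJordanDecomposition.posPart = μ.toJordanDecomposition.negPart) : μ = 0 := by
  rw [← μ.toSignedMeasure_toJordanDecomposition, JordanDecomposition.toSignedMeasure, sub_eq_zero]
  exact Measure.toSignedMeasure_congr h

theorem sigmoid_is_discriminatory_general {N : ℕ}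
    (hφ : Measurable φ) (hC : ∀ t, |φ t| ≤ C) (ha : Tendsto φ atBot (𝓝 a))
    (hb : Tendsto φ atTop (𝓝 b)) (hab : a ≠ b) (K : Set (Fin N → ℝ)) :
    Discriminatory φ K := by
  intro μ _ _ h
  refine signedMeasure_eq_zero_of_posPart_eq_negPart <|
    measure_map_injective_of_eq_comap (f := ((↑) : K → Fin N → ℝ)) rfl <|
    measure_ext_of_forall_integral_comp_dotProduct_add hφ hC ha hb hab fun y θ ↦ ?_
  have hmap (ρ : Measure K) :
      ∫ x, φ (y ⬝ᵥ x + θ) ∂ρ.map (↑) = ∫ x : K, φ (y ⬝ᵥ (x : Fin N → ℝ) + θ) ∂ρ :=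
    integral_map measurable_subtype_coe.aemeasurable
      (hφ.comp (by unfold dotProduct; fun_prop)).aestronglyMeasurable
  rw [hmap, hmap]
  exact sub_eq_zero.1 (h y θ)

end

/-- The logistic sigmoid `σ(x) = 1/(1 + e^{−x})` is
discriminatory for every compact set `K ⊆ ℝ^N`. -/
theorem sigmoid_is_discriminatory {N : ℕ} (K : Set (Fin N → ℝ))
    (hK : IsCompact K) :
    Discriminatory (fun x : ℝ => 1 / (1 + Real.exp (-x))) K := by
  simp only [one_div]
  exact sigmoid_is_discriminatory_general continuous_sigmoid.measurable
    (fun t ↦ (abs_of_pos (Real.sigmoid_pos t)).trans_le (Real.sigmoid_le_one t))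
    Real.tendsto_sigmoid_atBot Real.tendsto_sigmoid_atTop zero_ne_one K
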